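/- Let F_n be the free group on x_1,…,x_n and let RF_n be the reduced free group. An element w ∈ F_n represents the identity of RF_n if and only if its Magnus expansion has the form E(w) = 1 + (repeated terms), i.e., every monomial X_{i_1}⋯X_{i_m} with pairwise distinct indices i_1,…,i_m has coefficient 0 in E(w). -/

import Mathlib

/-- Coefficient function of the Magnus expansion of a single letter `x_i^{±1}`:
`x_i ↦ 1 + X_i` and `x_i⁻¹ ↦ 1 - X_i + X_i² - ⋯`. -/
def genCoeff {n : ℕ} (i : Fin n) (b : Bool) (l : List (Fin n)) : ℤ :=
  if b then (if l = [] ∨ l = [i] then 1 else 0)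
  else (if l.all (· = i) then (-1) ^ l.length else 0)

/-- Convolution product on coefficient functions of noncommutative power series. -/
def conv {n : ℕ} (f g : List (Fin n) → ℤ) (l : List (Fin n)) : ℤ :=
  ∑ k ∈ Finset.range (l.length + 1), f (l.take k) * g (l.drop k)

/-- Coefficients of the Magnus expansion of a word in the letters `x_i^{±1}`. -/
def wordCoeff {n : ℕ} : List (Fin n × Bool) → List (Fin n) → ℤ
  | [] => fun l => if l = [] then 1 else 0
  | p :: rest => conv (genCoeff p.1 p.2) (wordCoeff rest)

/-- `magnus w l` is the coefficient of the noncommutative monomial `X_{l}` in the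
Magnus expansion `E(w) ∈ ℤ⟨⟨X_1,…,X_n⟩⟩` of the free group element `w`. -/
def magnus {n : ℕ} (w : FreeGroup (Fin n)) (l : List (Fin n)) : ℤ :=
  wordCoeff w.toWord l


/-- The set of relators `[x_i, w⁻¹ x_i w]` (with `[a,b] = a⁻¹b⁻¹ab`) in the free group. -/
def redRelators (n : ℕ) : Set (FreeGroup (Fin n)) :=
  {r | ∃ (i : Fin n) (w : FreeGroup (Fin n)),
    r = (FreeGroup.of i)⁻¹ * (w⁻¹ * FreeGroup.of i * w)⁻¹ *
        FreeGroup.of i * (w⁻¹ * FreeGroup.of i * w)}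

/-- The reduced free group `RF_n`. -/
def RF (n : ℕ) := FreeGroup (Fin n) ⧸ Subgroup.normalClosure (redRelators n)

instance (n : ℕ) : Group (RF n) := by unfold RF; infer_instance

noncomputable section RMI

/-- finitely supported series -/
abbrev RV (n : ℕ) := List (Fin n) →₀ ℤ

def rL {n : ℕ} (j : Fin n) : Module.End ℤ (RV n) :=
  Finsupp.linearCombination ℤ (fun l : List (Fin n) => if j ∈ l then (0 : RV n) else Finsupp.single (j :: l) 1)

lemma rL_single {n : ℕ} (j : Fin n) (l : List (Fin n)) :
    rL j (Finsupp.single l 1) = if j ∈ l then (0 : RV n) else Finsupp.single (j :: l) 1 := by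
  simp [rL]

lemma rL_sq {n : ℕ} (j : Fin n) : rL j * rL j = 0 := by
  apply Finsupp.lhom_ext'
  intro l
  apply LinearMap.ext_ring
  simp only [LinearMap.comp_apply, Finsupp.lsingle_apply, Module.End.mul_apply, rL_single]
  split_ifs <;> simp [rL_single]

def rTgen {n : ℕ} (j : Fin n) : (Module.End ℤ (RV n))ˣ where
  val := 1 + rL j
  inv := 1 - rL j
  val_inv := by
    have := rL_sq j
    rw [add_mul, mul_sub, mul_sub, this]; simp
  inv_val := by
    have := rL_sq j
    rw [sub_mul, mul_add, mul_add, this]; simp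

def rT {n : ℕ} : FreeGroup (Fin n) →* (Module.End ℤ (RV n))ˣ := FreeGroup.lift rTgen

lemma rT_of {n : ℕ} (j : Fin n) (f : RV n) :
    (rT (FreeGroup.of j)).val f = f + rL j f := by
  simp [rT, rTgen]

lemma rT_of_inv {n : ℕ} (j : Fin n) (f : RV n) :
    (rT (FreeGroup.of j)⁻¹).val f = f - rL j f := by
  rw [rT, map_inv, FreeGroup.lift_apply_of]
  change ((1 : Module.End ℤ (RV n)) - rL j) f = _
  simp

lemma rT_mul {n : ℕ} (g h : FreeGroup (Fin n)) (f : RV n) :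
    (rT (g * h)).val f = (rT g).val ((rT h).val f) := by
  simp [map_mul]

/-! supports -/

def rW {n : ℕ} (j : Fin n) : Submodule ℤ (RV n) :=
  Submodule.span ℤ {f | ∃ l : List (Fin n), j ∈ l ∧ f = Finsupp.single l 1}

lemma rL_mem_rW {n : ℕ} (j : Fin n) (f : RV n) : rL j f ∈ rW j := by
  induction f using Finsupp.induction_linear with
  | zero => simp
  | add f g hf hg => rw [map_add]; exact add_mem hf hg
  | single l a =>
    have : (Finsupp.single l a : RV n) = a • Finsupp.single l 1 := by simp
    rw [this, map_smul, rL_single]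
    apply Submodule.smul_mem
    split_ifs
    · simp
    · exact Submodule.subset_span ⟨j :: l, by simp, rfl⟩

lemma rL_rW {n : ℕ} (j k : Fin n) (f : RV n) (hf : f ∈ rW j) : rL k f ∈ rW j := by
  induction hf using Submodule.span_induction with
  | zero => simp
  | add f g _ _ hf hg => rw [map_add]; exact add_mem hf hg
  | smul a f _ hf => rw [map_smul]; exact Submodule.smul_mem _ _ hf
  | mem f h =>
    obtain ⟨l, hl, rfl⟩ := h
    rw [rL_single]
    split_ifs
    · simp
    · exact Submodule.subset_span ⟨k :: l, by simp [hl], rfl⟩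

lemma rL_rW_zero {n : ℕ} (j : Fin n) (f : RV n) (hf : f ∈ rW j) : rL j f = 0 := by
  induction hf using Submodule.span_induction with
  | zero => simp
  | add f g _ _ hf hg => rw [map_add, hf, hg, add_zero]
  | smul a f _ hf => rw [map_smul, hf, smul_zero]
  | mem f h =>
    obtain ⟨l, hl, rfl⟩ := h
    rw [rL_single, if_pos hl]

lemma rT_rW {n : ℕ} (j : Fin n) (g : FreeGroup (Fin n)) :
    ∀ f ∈ rW j, (rT g).val f ∈ rW j := by
  induction g using FreeGroup.induction_on with
  | C1 => intro f hf; simpa using hf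
  | of k => intro f hf; rw [rT_of]; exact add_mem hf (rL_rW j k f hf)
  | inv_of k _ => intro f hf; rw [rT_of_inv]; exact sub_mem hf (rL_rW j k f hf)
  | mul g h hg hh => intro f hf; rw [rT_mul]; exact hg _ (hh _ hf)

lemma rL_T_L {n : ℕ} (j : Fin n) (g : FreeGroup (Fin n)) :
    rL j * (rT g).val * rL j = 0 := by
  refine LinearMap.ext fun f => ?_
  exact rL_rW_zero j _ (rT_rW j g _ (rL_mem_rW j _))

lemma rT_ker {n : ℕ} (w : FreeGroup (Fin n))
    (hw : w ∈ Subgroup.normalClosure (redRelators n)) : rT w = 1 := by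
  have : Subgroup.normalClosure (redRelators n) ≤ (rT (n := n)).ker := by
    apply Subgroup.normalClosure_le_normal
    rintro r ⟨i, g, rfl⟩
    simp only [SetLike.mem_coe, MonoidHom.mem_ker]
    have hc : Commute (rT (FreeGroup.of i)) (rT (g⁻¹ * FreeGroup.of i * g)) := by
      rw [Commute, SemiconjBy]
      apply Units.ext
      have h1 := rL_T_L i g
      have h2 := rL_T_L i g⁻¹
      have e : (rT (FreeGroup.of i)).val = 1 + rL i := by
        simp [rT, rTgen]
      have e2 : (rT g⁻¹).val * (rT g).val = 1 := by
        rw [← Units.val_mul, ← map_mul]; simp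
      have e3 : (rT (g⁻¹ * FreeGroup.of i * g)).val = 1 + (rT g⁻¹).val * rL i * (rT g).val := by
        rw [map_mul, map_mul, Units.val_mul, Units.val_mul, e, mul_add, add_mul, mul_one, e2]
      rw [Units.val_mul, Units.val_mul, e, e3]
      have a1 : rL i * ((rT g⁻¹).val * rL i * (rT g).val) = 0 := by
        rw [← mul_assoc, ← mul_assoc, h2, zero_mul]
      have a2 : ((rT g⁻¹).val * rL i * (rT g).val) * rL i = 0 := by
        rw [mul_assoc, mul_assoc, ← mul_assoc (rL i), h1, mul_zero]
      rw [add_mul, mul_add, mul_add, add_mul, mul_add, mul_add, a1, a2]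
      simp only [mul_one, one_mul, add_zero]; abel
    generalize g⁻¹ * FreeGroup.of i * g = y at *
    rw [map_mul, map_mul, map_mul, map_inv, map_inv, mul_assoc, hc.eq]
    group
  exact this hw

/-! coefficients -/

def rδ {n : ℕ} : RV n := Finsupp.single [] 1

lemma rL_nil {n : ℕ} (j : Fin n) (f : RV n) : rL j f [] = 0 := by
  induction f using Finsupp.induction_linear with
  | zero => simp
  | add f g hf hg => rw [map_add, Finsupp.add_apply, hf, hg, add_zero]
  | single l a =>
    have : (Finsupp.single l a : RV n) = a • Finsupp.single l 1 := by simp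
    rw [this, map_smul, rL_single]
    split_ifs <;> simp

lemma rL_cons {n : ℕ} (j k : Fin n) (m : List (Fin n)) (f : RV n) :
    rL j f (k :: m) = if k = j ∧ j ∉ m then f m else 0 := by
  induction f using Finsupp.induction_linear with
  | zero => simp
  | add f g hf hg =>
    rw [map_add, Finsupp.add_apply, hf, hg, Finsupp.add_apply]; split_ifs <;> simp
  | single l a =>
    have : (Finsupp.single l a : RV n) = a • Finsupp.single l 1 := by simp
    rw [this, map_smul, rL_single]
    by_cases h1 : j ∈ l <;> by_cases h2 : l = m <;> by_cases h3 : k = j <;>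
      simp_all [Finsupp.single_apply, eq_comm]

lemma conv_nil {n : ℕ} (j : Fin n) (b : Bool) (f : List (Fin n) → ℤ) :
    conv (genCoeff j b) f [] = f [] := by
  cases b <;> simp [conv, genCoeff]

lemma conv_cons {n : ℕ} (j k : Fin n) (b : Bool) (m : List (Fin n)) (f : List (Fin n) → ℤ)
    (h : (k :: m).Nodup) :
    conv (genCoeff j b) f (k :: m) =
      f (k :: m) + (if k = j then (if b then f m else - f m) else 0) := by
  rw [conv, List.length_cons, Finset.sum_range_succ', Finset.sum_range_succ', Finset.sum_eq_zero]
  · by_cases hk : k = j <;> cases b <;> simp [genCoeff, hk, add_comm]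
  · intro t ht
    rw [Finset.mem_range] at ht
    cases m with
    | nil => simp at ht
    | cons q m =>
      have hq : k ≠ q := by rintro rfl; simp at h
      cases b
      · have : ¬ (k = j ∧ q = j) := by rintro ⟨rfl, rfl⟩; exact hq rfl
        rw [genCoeff, if_neg (by simp), if_neg (by
          simp only [List.take_succ_cons, List.all_cons, Bool.and_eq_true, decide_eq_true_eq]
          tauto), zero_mul]
      · simp [genCoeff]

lemma rT_coeff {n : ℕ} (L : List (Fin n × Bool)) (l : List (Fin n)) :
    (rT (FreeGroup.mk L)).val rδ l = if l.Nodup then wordCoeff L l else 0 := by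
  induction L generalizing l with
  | nil =>
    rw [← FreeGroup.one_eq_mk, map_one]
    by_cases h : l = [] <;> simp [rδ, wordCoeff, h, Finsupp.single_apply, eq_comm]
  | cons p L ih =>
    obtain ⟨j, b⟩ := p
    have e : (FreeGroup.mk ((j, b) :: L)) = FreeGroup.mk [(j, b)] * FreeGroup.mk L := by
      simp [FreeGroup.mul_mk]
    have e2 : (rT (FreeGroup.mk ((j, b) :: L))).val rδ =
        (rT (FreeGroup.mk L)).val rδ +
          (if b then rL j ((rT (FreeGroup.mk L)).val rδ)
            else - rL j ((rT (FreeGroup.mk L)).val rδ)) := by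
      rw [e, rT_mul]
      cases b
      · have : (FreeGroup.mk [(j, false)]) = (FreeGroup.of j)⁻¹ := by
          simp [FreeGroup.of, FreeGroup.inv_mk, FreeGroup.invRev]
        rw [this, rT_of_inv]; simp [sub_eq_add_neg]
      · exact rT_of j _
    rw [e2, Finsupp.add_apply, wordCoeff]
    cases l with
    | nil =>
      rw [conv_nil, ih]
      cases b <;> simp [rL_nil]
    | cons k m =>
      rw [ih]
      by_cases h : (k :: m).Nodup
      · rw [if_pos h, if_pos h, conv_cons _ _ _ _ _ h]
        rw [List.nodup_cons] at h
        by_cases hk : k = j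
        · subst hk
          cases b <;> simp [rL_cons, ih, h.1, h.2]
        · cases b <;> simp [rL_cons, hk]
      · rw [if_neg h, if_neg h]
        rw [List.nodup_cons] at h
        have : rL j ((rT (FreeGroup.mk L)).val rδ) (k :: m) = 0 := by
          rw [rL_cons, ih]
          by_cases hk : k = j
          · subst hk
            by_cases hm : k ∈ m <;> simp_all
          · simp [hk]
        cases b <;> simp [this]

lemma rT_magnus {n : ℕ} (w : FreeGroup (Fin n)) (l : List (Fin n)) :
    (rT w).val rδ l = if l.Nodup then magnus w l else 0 := by
  rw [magnus, ← rT_coeff, FreeGroup.mk_toWord]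

lemma wordCoeff_nil {n : ℕ} (L : List (Fin n × Bool)) : wordCoeff L [] = 1 := by
  induction L with
  | nil => simp [wordCoeff]
  | cons p L ih => rw [wordCoeff, conv_nil, ih]

/-! abstract vanishing lemma -/

section abs
variable {n : ℕ} {A : Type*} [AddCommGroup A] (c : FreeGroup (Fin n) → (A →+ A))

def rU : List (Fin n) → (A →+ A)
  | [] => AddMonoidHom.id A
  | j :: l => (rU l).comp (c (FreeGroup.of j) - AddMonoidHom.id A)

def rPhi : RV n →ₗ[ℤ] (A →+ A) := Finsupp.linearCombination ℤ (rU c)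

def rPsi (ψ : FreeGroup (Fin n) → A) : List (Fin n) → A
  | [] => 0
  | j :: l => rU c l (ψ (FreeGroup.of j))

def rPhi' (ψ : FreeGroup (Fin n) → A) : RV n →ₗ[ℤ] A := Finsupp.linearCombination ℤ (rPsi c ψ)

lemma rU_zero (h1 : ∀ a, c 1 a = a) (hm : ∀ g h a, c (g * h) a = c h (c g a))
    (j : Fin n) (l : List (Fin n)) (hj : j ∈ l) (a : A)
    (ha : ∀ g, c (FreeGroup.of j) (c g a) = c g a) : rU c l a = 0 := by
  induction l generalizing a with
  | nil => simp at hj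
  | cons k l ih =>
    simp only [rU, AddMonoidHom.comp_apply, AddMonoidHom.sub_apply, AddMonoidHom.id_apply]
    by_cases hk : j = k
    · subst hk
      have := ha 1
      rw [h1] at this
      rw [this, sub_self, map_zero]
    · apply ih
      · simpa [hk] using hj
      · intro g
        rw [map_sub, map_sub, ← hm (FreeGroup.of k) g, ha, ha]

lemma rPhi_L (h1 : ∀ a, c 1 a = a) (hm : ∀ g h a, c (g * h) a = c h (c g a))
    (hk : ∀ j g a, c (FreeGroup.of j) (c g (c (FreeGroup.of j) a - a)) =
      c g (c (FreeGroup.of j) a - a)) (j : Fin n) (f : RV n) (a : A) :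
    rPhi c (rL j f) a = rPhi c f (c (FreeGroup.of j) a - a) := by
  induction f using Finsupp.induction_linear with
  | zero => simp
  | add f g hf hg => simp only [map_add, AddMonoidHom.add_apply, hf, hg]
  | single l z =>
    have : (Finsupp.single l z : RV n) = z • Finsupp.single l 1 := by simp
    rw [this, map_smul, map_smul, map_smul, rL_single, AddMonoidHom.smul_apply,
      AddMonoidHom.smul_apply]
    congr 1
    split_ifs with h
    · simp only [rPhi, Finsupp.linearCombination_single, one_smul, map_zero,
        AddMonoidHom.zero_apply]
      exact (rU_zero c h1 hm j l h _ (fun g => hk j g a)).symm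
    · simp [rPhi, rU]

lemma rPhi'_L (h1 : ∀ a, c 1 a = a) (hm : ∀ g h a, c (g * h) a = c h (c g a))
    (ψ : FreeGroup (Fin n) → A)
    (hψ : ∀ j g, c (FreeGroup.of j) (c g (ψ (FreeGroup.of j))) = c g (ψ (FreeGroup.of j)))
    (j : Fin n) (f : RV n) :
    rPhi' c ψ (rL j f) = rPhi c f (ψ (FreeGroup.of j)) := by
  induction f using Finsupp.induction_linear with
  | zero => simp
  | add f g hf hg => simp only [map_add, AddMonoidHom.add_apply, hf, hg]
  | single l z =>
    have : (Finsupp.single l z : RV n) = z • Finsupp.single l 1 := by simp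
    rw [this, map_smul, map_smul, map_smul, rL_single, AddMonoidHom.smul_apply]
    congr 1
    split_ifs with h
    · simp only [rPhi, Finsupp.linearCombination_single, one_smul, map_zero]
      exact (rU_zero c h1 hm j l h _ (hψ j)).symm
    · simp [rPhi, rPhi', rPsi]

lemma r_vanish (h1 : ∀ a, c 1 a = a) (hm : ∀ g h a, c (g * h) a = c h (c g a))
    (hk : ∀ j g a, c (FreeGroup.of j) (c g (c (FreeGroup.of j) a - a)) =
      c g (c (FreeGroup.of j) a - a))
    (ψ : FreeGroup (Fin n) → A) (hψm : ∀ g h, ψ (g * h) = c h (ψ g) + ψ h)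
    (hψ : ∀ j g, c (FreeGroup.of j) (c g (ψ (FreeGroup.of j))) = c g (ψ (FreeGroup.of j)))
    (w : FreeGroup (Fin n)) (hw : (rT w).val rδ = rδ) : ψ w = 0 := by
  have hψ1 : ψ 1 = 0 := by
    have := hψm 1 1
    rw [mul_one, h1] at this
    simpa using this
  have A1 : ∀ g f a, rPhi c ((rT g).val f) a = rPhi c f (c g a) := by
    intro g
    induction g using FreeGroup.induction_on with
    | C1 => intro f a; simp [h1]
    | of j =>
      intro f a
      rw [rT_of, map_add, AddMonoidHom.add_apply, rPhi_L c h1 hm hk, map_sub]; abel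
    | inv_of j ih =>
      intro f a
      have e : f = (rT (FreeGroup.of j)).val ((rT (FreeGroup.of j)⁻¹).val f) := by
        rw [← rT_mul]; simp
      conv_rhs => rw [e, ih, ← hm]
      simp [h1]
    | mul g h hg hh => intro f a; rw [rT_mul, hg, hh, hm]
  have A2 : ∀ g f, rPhi' c ψ ((rT g).val f) = rPhi' c ψ f + rPhi c f (ψ g) := by
    intro g
    induction g using FreeGroup.induction_on with
    | C1 => intro f; simp [hψ1]
    | of j =>
      intro f
      rw [rT_of, map_add, rPhi'_L c h1 hm ψ hψ]
    | inv_of j ih =>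
      intro f
      have e : f = (rT (FreeGroup.of j)).val ((rT (FreeGroup.of j)⁻¹).val f) := by
        rw [← rT_mul]; simp
      have e3 : ψ (FreeGroup.of j)⁻¹ = - c (FreeGroup.of j)⁻¹ (ψ (FreeGroup.of j)) := by
        have := hψm (FreeGroup.of j) (FreeGroup.of j)⁻¹
        rw [mul_inv_cancel, hψ1] at this
        exact (neg_eq_of_add_eq_zero_right this.symm).symm
      have e2 := ih ((rT (FreeGroup.of j)⁻¹).val f)
      rw [← e, A1] at e2
      rw [e2, e3, map_neg]; abel
    | mul g h hg hh =>
      intro f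
      rw [rT_mul, hg, hh, hψm, A1, map_add]; abel
  have := A2 w rδ
  rw [hw] at this
  simpa [rPhi, rδ, rU] using this

end abs

/-! group lemma -/

def rK {n : ℕ} (S : Finset (Fin n)) : FreeGroup (Fin n) →* FreeGroup (Fin n) :=
  FreeGroup.lift (fun j => if j ∈ S then 1 else FreeGroup.of j)

lemma nc_comm {G : Type*} [Group G] (x : G) (h : ∀ g : G, Commute x (g⁻¹ * x * g)) :
    ∀ a ∈ Subgroup.normalClosure {x}, ∀ b ∈ Subgroup.normalClosure {x}, a * b = b * a := by
  have h' : ∀ g k : G, Commute (g * x * g⁻¹) (k * x * k⁻¹) := by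
    intro g k
    have := h (k⁻¹ * g)
    have h2 := (Commute.conj_iff g).mpr this
    convert h2 using 1
    group
  have : IsMulCommutative (Subgroup.normalClosure {x}) := by
    rw [Subgroup.normalClosure]
    apply Subgroup.isMulCommutative_closure
    intro a ha b hb
    rw [Group.mem_conjugatesOfSet_iff] at ha hb
    obtain ⟨_, rfl, ha⟩ := ha
    obtain ⟨_, rfl, hb⟩ := hb
    rw [isConj_iff] at ha hb
    obtain ⟨g, rfl⟩ := ha
    obtain ⟨k, rfl⟩ := hb
    exact h' g k
  intro a ha b hb
  exact congrArg Subtype.val (this.is_comm.comm ⟨a, ha⟩ ⟨b, hb⟩)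

lemma r_group {n : ℕ} {G : Type*} [Group G] (φ : FreeGroup (Fin n) →* G)
    (hs : Function.Surjective φ)
    (hc : ∀ i (g : G), Commute (φ (FreeGroup.of i)) (g⁻¹ * φ (FreeGroup.of i) * g))
    (i : Fin n) (w : FreeGroup (Fin n)) (hw : (rT w).val rδ = rδ) :
    φ (rK {i} w) = φ w := by
  set N := Subgroup.normalClosure {φ (FreeGroup.of i)} with hN
  have hcomm : ∀ j, ∀ a ∈ Subgroup.normalClosure {φ (FreeGroup.of j)},
      ∀ b ∈ Subgroup.normalClosure {φ (FreeGroup.of j)}, a * b = b * a :=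
    fun j => nc_comm _ (hc j)
  have hx : ∀ j, φ (FreeGroup.of j) ∈ Subgroup.normalClosure {φ (FreeGroup.of j)} :=
    fun j => Subgroup.subset_normalClosure rfl
  letI : CommGroup N := { (inferInstance : Group N) with
    mul_comm := fun a b => Subtype.ext (hcomm i a a.2 b b.2) }
  -- conjugation action
  let c : FreeGroup (Fin n) → (Additive N →+ Additive N) := fun g =>
    MonoidHom.toAdditive (MulAut.conjNormal (H := N) (φ g)⁻¹).toMonoidHom
  have cval : ∀ g (a : Additive N), ((c g a).toMul : G) = (φ g)⁻¹ * (a.toMul : G) * φ g := by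
    intro g a
    simp [c]
  have ext' : ∀ a b : Additive N, (a.toMul : G) = (b.toMul : G) → a = b := by
    intro a b h
    exact Additive.toMul.injective (Subtype.ext h)
  have hψmem : ∀ g, (φ (rK {i} g))⁻¹ * φ g ∈ N := by
    intro g
    have : (QuotientGroup.mk' N).comp (φ.comp (rK {i})) = (QuotientGroup.mk' N).comp φ := by
      ext j
      by_cases hj : j = i
      · subst hj
        simp only [MonoidHom.comp_apply, rK, FreeGroup.lift_apply_of, Finset.mem_singleton, if_true,
          map_one]
        exact ((QuotientGroup.eq_one_iff _).mpr (hx j)).symm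
      · simp [rK, hj]
    exact QuotientGroup.eq.mp (DFunLike.congr_fun this g)
  let ψ : FreeGroup (Fin n) → Additive N := fun g => Additive.ofMul ⟨_, hψmem g⟩
  have ψval : ∀ g, ((ψ g).toMul : G) = (φ (rK {i} g))⁻¹ * φ g := fun g => rfl
  have key : ψ w = 0 := by
    refine r_vanish c ?_ ?_ ?_ ψ ?_ ?_ w hw
    · intro a; apply ext'; rw [cval]; simp
    · intro g h a; apply ext'; rw [cval, cval, cval]; simp [mul_assoc]
    · intro j g a
      apply ext'
      rw [cval]
      have : ((c g (c (FreeGroup.of j) a - a)).toMul : G) ∈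
          Subgroup.normalClosure {φ (FreeGroup.of j)} := by
        rw [cval, toMul_sub]
        have hn : (Subgroup.normalClosure {φ (FreeGroup.of j)}).Normal := inferInstance
        have := hn.conj_mem ((((c (FreeGroup.of j) a).toMul / a.toMul : N)) : G) ?_ (φ g)⁻¹
        · simpa using this
        · rw [Subgroup.coe_div, cval, div_eq_mul_inv, mul_assoc, mul_assoc]
          apply mul_mem (inv_mem (hx j))
          rw [← mul_assoc]
          exact hn.conj_mem _ (hx j) _
      rw [mul_assoc, hcomm j _ this _ (hx j), inv_mul_cancel_left]
    · intro g h
      apply ext'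
      rw [toMul_add, Subgroup.coe_mul, cval, ψval, ψval, ψval]
      have hh := hcomm i _ (hψmem h)
      -- conj by φ h equals conj by φ (κ h) on N
      have e : φ h = φ (rK {i} h) * ((φ (rK {i} h))⁻¹ * φ h) := by group
      have hg : (φ (rK {i} h))⁻¹ * ((φ (rK {i} g))⁻¹ * φ g) * φ (rK {i} h) ∈ N := by
        have hn : N.Normal := inferInstance
        simpa using hn.conj_mem _ (hψmem g) (φ (rK {i} h))⁻¹
      have q := hh _ hg
      have e2 : (φ h)⁻¹ * ((φ (rK {i} g))⁻¹ * φ g) * φ h =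
          ((φ (rK {i} h))⁻¹ * φ h)⁻¹ * ((φ (rK {i} h))⁻¹ * ((φ (rK {i} g))⁻¹ * φ g) * φ (rK {i} h)
            * ((φ (rK {i} h))⁻¹ * φ h)) := by group
      rw [e2, ← q]
      simp only [map_mul]
      group
    · intro j g
      by_cases hj : j = i
      · subst hj
        apply ext'
        rw [cval, mul_assoc, hcomm j _ (Subtype.property _) _ (hx j), inv_mul_cancel_left]
      · have : ψ (FreeGroup.of j) = 0 := by
          apply ext'
          rw [ψval]
          simp [rK, hj]
        rw [this]; simp
  have := ψval w
  rw [key] at this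
  exact (inv_mul_eq_one.mp (by simpa using this.symm))

lemma rK_comp {n : ℕ} (i : Fin n) (S : Finset (Fin n)) (w : FreeGroup (Fin n)) :
    rK {i} (rK S w) = rK (insert i S) w := by
  have : (rK {i}).comp (rK S) = rK (insert i S) := by
    ext j
    by_cases h1 : j ∈ S <;> by_cases h2 : j = i
    · subst h2; simp [rK, h1]
    · simp [rK, h1, h2]
    · subst h2; simp [rK, h1]
    · simp [rK, h1, h2]
  exact DFunLike.congr_fun this w

end RMI

/-- w represents the identity of the reduced free group RF_n iff every
non-repeated monomial (pairwise distinct indices) of positive degree has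
coefficient 0 in E(w). -/
theorem reduced_magnus_injective {n : ℕ} (w : FreeGroup (Fin n)) :
    w ∈ Subgroup.normalClosure (redRelators n) ↔
      ∀ l : List (Fin n), l ≠ [] → l.Nodup → magnus w l = 0 := by
  constructor
  · intro hw l hl hn
    have h := rT_magnus w l
    rw [rT_ker w hw, if_pos hn] at h
    rw [← h]
    simp [rδ, Finsupp.single_apply, hl.symm]
  · intro hw
    set N := Subgroup.normalClosure (redRelators n) with hN
    let φ : FreeGroup (Fin n) →* FreeGroup (Fin n) ⧸ N := QuotientGroup.mk' N
    have hs : Function.Surjective φ := QuotientGroup.mk'_surjective N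
    have hc : ∀ i (g : FreeGroup (Fin n) ⧸ N),
        Commute (φ (FreeGroup.of i)) (g⁻¹ * φ (FreeGroup.of i) * g) := by
      intro i g
      obtain ⟨g, rfl⟩ := hs g
      have hr : φ ((FreeGroup.of i)⁻¹ * (g⁻¹ * FreeGroup.of i * g)⁻¹ *
          FreeGroup.of i * (g⁻¹ * FreeGroup.of i * g)) = 1 :=
        (QuotientGroup.eq_one_iff _).mpr (Subgroup.subset_normalClosure ⟨i, g, rfl⟩)
      rw [← map_inv, ← map_mul, ← map_mul]
      generalize g⁻¹ * FreeGroup.of i * g = y at *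
      simp only [map_mul, map_inv] at hr
      rw [Commute, SemiconjBy]
      rw [← mul_inv_rev, mul_assoc, inv_mul_eq_one] at hr
      exact hr.symm
    have h0 : (rT w).val rδ = rδ := by
      ext l
      rw [rT_magnus]
      by_cases hl : l = []
      · subst hl; simp [magnus, wordCoeff_nil, rδ]
      · by_cases hn : l.Nodup
        · rw [if_pos hn, hw l hl hn]; simp [rδ, Finsupp.single_apply, Ne.symm hl]
        · rw [if_neg hn]; simp [rδ, Finsupp.single_apply, Ne.symm hl]
    have main : ∀ S : Finset (Fin n), φ (rK S w) = φ w := by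
      intro S
      induction S using Finset.induction_on with
      | empty =>
        have : rK (∅ : Finset (Fin n)) = MonoidHom.id _ := by
          ext j; simp [rK]
        rw [this]; rfl
      | insert i S _ ih =>
        rw [← rK_comp, r_group φ hs hc i (rK S w), ih]
        have hmem : w⁻¹ * rK S w ∈ N := QuotientGroup.eq.mp ih.symm
        have := rT_ker _ hmem
        rw [map_mul, map_inv, inv_mul_eq_one] at this
        rw [← this, h0]
    have hu : rK (Finset.univ : Finset (Fin n)) w = 1 := by
      have : rK (Finset.univ : Finset (Fin n)) = 1 := by
        ext j; simp [rK]
      rw [this]; rfl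
    have := main Finset.univ
    rw [hu, map_one] at this
    exact (QuotientGroup.eq_one_iff _).mp this.symm
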